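/- arXiv:2111.07913 — 3 statements merged into one kernel-verified Lean document; each statement's English description precedes it below -/
import Mathlib

section
/- Let A ∈ ℝ^{m×n} have rank m with m < n, b ∈ ℝ^m, P = {x ∈ ℝⁿ : Ax = b, x ≥ 0}. Let B ⊆ [n] be a feasible basis with N = [n] \ B and x* = (A_B⁻¹ b, 0_N) ∈ P. For y ∈ P define L(y) = {i ∈ [n] : x*_i > n · κ_A · ‖y_N‖₁} and R(y) = {i ∈ [n] : y_i ≤ (n − m) · x*_i}. Let x ∈ P, T = [n] \ L(x), let h^(1), …, h^(k) be a conformal circuit decomposition of x* − x with k ≤ n − m, let g = h^(j) for some j maximizing ‖h^(i)_N‖₁ over i ∈ [k], and let x' = aug_P(x, g). If ‖x_T − x*_T‖_∞ > 2 m n² κ_A² · ‖x*_T‖_∞, then R(x) ⊊ R(x'). -/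
open Matrix
open scoped BigOperators

noncomputable section
open Classical

/-- The set of elementary vectors of `ker(A)`: support-minimal nonzero kernel vectors. -/
def elemVecs {α β : Type} [Fintype α] [Fintype β] (A : Matrix α β ℝ) : Set (β → ℝ) :=
  {g | A.mulVec g = 0 ∧ g ≠ 0 ∧
    ∀ h : β → ℝ, A.mulVec h = 0 → h ≠ 0 →
      ¬ ({i | h i ≠ 0} ⊂ {i | g i ≠ 0})}

/-- The circuit imbalance measure `κ_A`. -/
def circImb {α β : Type} [Fintype α] [Fintype β] (A : Matrix α β ℝ) : ℝ :=
  sSup {r : ℝ | ∃ g ∈ elemVecs A, ∃ i j, g i ≠ 0 ∧ g j ≠ 0 ∧ r = |g j| / |g i|}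

/-- The ℓ∞-norm of the restriction of `v` to a set of coordinates `T`. -/
def normInfOn {n : ℕ} (T : Set (Fin n)) (v : Fin n → ℝ) : ℝ :=
  sSup ((fun i => |v i|) '' T)

/-!
Write `S = ‖x_N‖₁`, `G = ‖g_N‖₁` and `r = rank A`. A conformal decomposition splits `S` exactly
among its circuits, so `S ≤ (n - r) G`; since `g` is nonpositive on `N`, a step of length `α` uses
up `α G` of `S`, whence `α ≤ n - r`, while `1 ≤ α` by conformality. The upper bound shows that no
coordinate leaves `R`.

The coordinate `i` that blocks the step enters `R`. It was not in `R` before: if `i ∈ N`, then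
`x*_i = 0 < x_i`. If `i ∈ B`, then `x*_i ≤ x_i = α |g_i| ≤ κ S`, so `i ∈ T`. A circuit has at most
`r + 1 ≤ 2 r` nonzero entries, pairwise within a factor `κ`, so `G ≤ 2 r κ |g_i| ≤ 2 r κ x_i`, while
`‖x - x*‖_∞ ≤ κ S`. Together with the assumed gap, this gives `(n - r) x*_i < x_i`.
-/

section Columns

variable {ι β R : Type*} [Fintype β]

theorem mulVec_eq_sum_of_support_subset [CommSemiring R] (A : Matrix ι β R) {v : β → R}
    {S : Finset β} (hv : Function.support v ⊆ S) : A *ᵥ v = ∑ i ∈ S, v i • A.col i := by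
  rw [mulVec_eq_sum, ← Finset.sum_subset S.subset_univ]
  · exact Finset.sum_congr rfl fun i _ => op_smul_eq_smul _ _
  · intro i _ hi
    rw [Function.notMem_support.1 fun hvi => hi (hv hvi), MulOpposite.op_zero, zero_smul]

theorem linearIndepOn_col_iff_forall_mulVec_eq_zero [CommRing R] (A : Matrix ι β R)
    (S : Finset β) :
    LinearIndepOn R A.col S ↔ ∀ v, A *ᵥ v = 0 → Function.support v ⊆ S → v = 0 := by
  constructor
  · intro hS v hAv hvS
    rw [mulVec_eq_sum_of_support_subset A hvS] at hAv
    ext i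
    by_contra hvi
    exact hvi (linearIndepOn_finset_iff.1 hS v hAv i (hvS hvi))
  · intro hS
    refine linearIndepOn_finset_iff.2 fun f hf i hi => ?_
    have hsupp : Function.support (Set.indicator S f) ⊆ S := Set.support_indicator_subset
    have hker : A *ᵥ Set.indicator S f = 0 := by
      rw [mulVec_eq_sum_of_support_subset A hsupp, ← hf]
      exact Finset.sum_congr rfl fun j hj => by rw [Set.indicator_of_mem (Finset.mem_coe.2 hj)]
    simpa [hi] using congrFun (hS _ hker hsupp) i

theorem card_le_rank_of_linearIndepOn_col [Field R] [Finite ι] {A : Matrix ι β R} {S : Finset β}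
    (hS : LinearIndepOn R A.col S) : S.card ≤ A.rank := by
  have hspan : Set.range (fun i : S => A.col i) ⊆ Set.range A.col :=
    Set.range_comp_subset_range Subtype.val A.col
  calc S.card = Fintype.card S := (Fintype.card_coe S).symm
    _ = Module.finrank R (Submodule.span R (Set.range fun i : S => A.col i)) :=
        (finrank_span_eq_card hS).symm
    _ ≤ A.rank := by
        rw [rank_eq_finrank_span_cols]
        exact Submodule.finrank_mono (Submodule.span_mono hspan)

end Columns

section NormOneOn

variable {β : Type*}

/-- The ℓ₁-norm of the restriction of `v` to a finite set of coordinates `N`, the companion of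
`normInfOn`. -/
def normOneOn (N : Finset β) (v : β → ℝ) : ℝ :=
  ∑ i ∈ N, |v i|

theorem normOneOn_nonneg (N : Finset β) (v : β → ℝ) : 0 ≤ normOneOn N v :=
  Finset.sum_nonneg fun _ _ => abs_nonneg _

theorem abs_le_normOneOn {N : Finset β} {i : β} (hi : i ∈ N) (v : β → ℝ) :
    |v i| ≤ normOneOn N v :=
  Finset.single_le_sum (f := fun i => |v i|) (fun _ _ => abs_nonneg _) hi

theorem normOneOn_sub_of_forall_eq_zero {N : Finset β} {y : β → ℝ} (hy : ∀ i ∈ N, y i = 0)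
    (x : β → ℝ) : normOneOn N (y - x) = normOneOn N x :=
  Finset.sum_congr rfl fun i hi => by rw [Pi.sub_apply, hy i hi, zero_sub, abs_neg]

theorem mul_normOneOn_le_of_add_smul_nonneg {N : Finset β} {x g : β → ℝ} {a : ℝ}
    (hg : ∀ i ∈ N, g i ≤ 0) (hstep : 0 ≤ x + a • g) :
    a * normOneOn N g ≤ normOneOn N x := by
  rw [normOneOn, normOneOn, Finset.mul_sum]
  refine Finset.sum_le_sum fun i hi => ?_
  have hi_nonneg : 0 ≤ x i + a * g i := hstep i
  rw [abs_of_nonpos (hg i hi)]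
  linarith [le_abs_self (x i)]

end NormOneOn

section NormInfOn

variable {n : ℕ} {T : Set (Fin n)} {v x xstar : Fin n → ℝ} {i : Fin n}

theorem abs_le_normInfOn (hi : i ∈ T) (v : Fin n → ℝ) : |v i| ≤ normInfOn T v :=
  le_csSup (Set.toFinite _).bddAbove ⟨i, hi, rfl⟩

theorem normInfOn_le {c : ℝ} (hc : 0 ≤ c) (hv : ∀ i ∈ T, |v i| ≤ c) : normInfOn T v ≤ c :=
  Real.sSup_le (by rintro _ ⟨i, hi, rfl⟩; exact hv i hi) hc

theorem mul_lt_of_normInfOn_gap {c r κ S : ℝ} (hr : 0 ≤ r) (hκ : 0 ≤ κ) (hc : 0 ≤ c)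
    (hcn : c ≤ n) (hxstar : 0 ≤ xstar) (hiT : i ∈ T) (hdist : ∀ t, |x t - xstar t| ≤ κ * S)
    (hS : S ≤ c * (2 * r * κ * x i))
    (hgap : normInfOn T (x - xstar) > 2 * r * (n : ℝ) ^ 2 * κ ^ 2 * normInfOn T xstar) :
    c * xstar i < x i := by
  have hi_nonneg : 0 ≤ xstar i := hxstar i
  have hi_le : xstar i ≤ normInfOn T xstar :=
    (le_abs_self _).trans (abs_le_normInfOn hiT xstar)
  have hdistT : normInfOn T (x - xstar) ≤ κ * S :=
    normInfOn_le ((abs_nonneg _).trans (hdist i)) fun t _ => hdist t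
  refine lt_of_mul_lt_mul_left (a := 2 * r * c * κ ^ 2) ?_ (by positivity)
  calc 2 * r * c * κ ^ 2 * (c * xstar i)
      = 2 * r * c ^ 2 * κ ^ 2 * xstar i := by ring
    _ ≤ 2 * r * (n : ℝ) ^ 2 * κ ^ 2 * normInfOn T xstar := by gcongr
    _ < normInfOn T (x - xstar) := hgap
    _ ≤ κ * S := hdistT
    _ ≤ κ * (c * (2 * r * κ * x i)) := by gcongr
    _ = 2 * r * c * κ ^ 2 * x i := by ring

end NormInfOn

section ElementaryVectors

variable {ι β : Type} [Fintype ι] [Fintype β] {A : Matrix ι β ℝ} {g g' : β → ℝ}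

theorem eq_zero_of_support_ssubset_of_mem_elemVecs (hg : g ∈ elemVecs A) {v : β → ℝ}
    (hv : A *ᵥ v = 0) (hsupp : Function.support v ⊂ Function.support g) : v = 0 :=
  by_contra fun hne => hg.2.2 v hv hne hsupp

theorem eq_div_smul_of_mem_elemVecs (hg : g ∈ elemVecs A) (hg' : A *ᵥ g' = 0)
    (hsupp : Function.support g' ⊆ Function.support g) {i : β} (hi : g i ≠ 0) :
    g' = (g' i / g i) • g := by
  refine sub_eq_zero.1 (eq_zero_of_support_ssubset_of_mem_elemVecs hg ?_ ?_)
  · rw [mulVec_sub, mulVec_smul, hg', hg.1, smul_zero, sub_zero]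
  · refine (Set.ssubset_iff_of_subset fun t ht hgt => ?_).2 ⟨i, hi, ?_⟩
    · have hg't : g' t = 0 := Function.notMem_support.1 fun h => hsupp h hgt
      exact ht (by simp [hgt, hg't])
    · simp [hi]

theorem abs_div_abs_eq_of_support_eq (hg : g ∈ elemVecs A) (hg' : g' ∈ elemVecs A)
    (hsupp : Function.support g' = Function.support g) {i : β} (hi : g i ≠ 0) (j : β) :
    |g' j| / |g' i| = |g j| / |g i| := by
  have hi' : g' i ≠ 0 := hsupp.symm.subset hi
  have hj : g' j = g' i / g i * g j :=
    congrFun (eq_div_smul_of_mem_elemVecs hg hg'.1 hsupp.subset hi) j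
  rw [hj, abs_mul, abs_div]
  field_simp

theorem finite_circuit_ratios (A : Matrix ι β ℝ) :
    {r : ℝ | ∃ g ∈ elemVecs A, ∃ i j, g i ≠ 0 ∧ g j ≠ 0 ∧ r = |g j| / |g i|}.Finite := by
  let ratios (p : Set β × β × β) : Set ℝ :=
    {r | ∃ g ∈ elemVecs A, Function.support g = p.1 ∧ g p.2.1 ≠ 0 ∧ r = |g p.2.2| / |g p.2.1|}
  have hratios (p) : (ratios p).Subsingleton := by
    rintro _ ⟨g, hg, hgp, hi, rfl⟩ _ ⟨g', hg', hgp', -, rfl⟩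
    exact (abs_div_abs_eq_of_support_eq hg hg' (hgp'.trans hgp.symm) hi _).symm
  refine (Set.finite_iUnion fun p => (hratios p).finite).subset ?_
  rintro r ⟨g, hg, i, j, hi, -, hr⟩
  exact Set.mem_iUnion.2 ⟨(Function.support g, i, j), g, hg, rfl, hi, hr⟩

theorem one_le_circImb (hg : g ∈ elemVecs A) : 1 ≤ circImb A := by
  obtain ⟨i, hi⟩ := Function.ne_iff.1 hg.2.1
  exact le_csSup (finite_circuit_ratios A).bddAbove
    ⟨g, hg, i, i, hi, hi, (div_self (abs_ne_zero.2 hi)).symm⟩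

theorem abs_le_circImb_mul_abs (hg : g ∈ elemVecs A) {i : β} (hi : g i ≠ 0) (j : β) :
    |g j| ≤ circImb A * |g i| := by
  have hκ := one_le_circImb hg
  by_cases hj : g j = 0
  · rw [hj, abs_zero]
    positivity
  · rw [← div_le_iff₀ (abs_pos.2 hi)]
    exact le_csSup (finite_circuit_ratios A).bddAbove ⟨g, hg, i, j, hi, hj, rfl⟩

theorem card_support_le_rank_add_one (hg : g ∈ elemVecs A) :
    (Finset.univ.filter (g · ≠ 0)).card ≤ A.rank + 1 := by
  obtain ⟨e, he⟩ := Function.ne_iff.1 hg.2.1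
  have hindep : LinearIndepOn ℝ A.col ((Finset.univ.filter (g · ≠ 0)).erase e) := by
    refine (linearIndepOn_col_iff_forall_mulVec_eq_zero A _).2 fun v hAv hv => ?_
    refine eq_zero_of_support_ssubset_of_mem_elemVecs hg hAv ?_
    refine (Set.ssubset_iff_of_subset fun t ht => ?_).2 ⟨e, he, fun hve => ?_⟩
    · simpa using Finset.mem_of_mem_erase (hv ht)
    · simpa using hv hve
  have := card_le_rank_of_linearIndepOn_col hindep
  rwa [Finset.card_erase_of_mem (by simpa using he), Nat.sub_le_iff_le_add] at this

theorem normOneOn_le_rank_add_one_mul (hg : g ∈ elemVecs A) (N : Finset β) {i : β}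
    (hi : g i ≠ 0) : normOneOn N g ≤ (A.rank + 1) * (circImb A * |g i|) := by
  have hκ := one_le_circImb hg
  calc normOneOn N g ≤ ∑ j, |g j| :=
        Finset.sum_le_univ_sum_of_nonneg fun _ => abs_nonneg _
    _ = ∑ j ∈ Finset.univ.filter (g · ≠ 0), |g j| :=
        (Finset.sum_filter_of_ne fun j _ hj => abs_ne_zero.1 hj).symm
    _ ≤ (Finset.univ.filter (g · ≠ 0)).card • (circImb A * |g i|) :=
        Finset.sum_le_card_nsmul _ _ _ fun j _ => abs_le_circImb_mul_abs hg hi j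
    _ ≤ (A.rank + 1) * (circImb A * |g i|) := by
        rw [nsmul_eq_mul]
        gcongr
        exact_mod_cast card_support_le_rank_add_one hg

variable [DecidableEq β] {B : Finset β}

theorem exists_mem_compl_ne_zero_of_mem_elemVecs (hB : LinearIndepOn ℝ A.col B)
    (hg : g ∈ elemVecs A) : ∃ i ∈ Bᶜ, g i ≠ 0 := by
  by_contra! hgB
  refine hg.2.1 ((linearIndepOn_col_iff_forall_mulVec_eq_zero A B).1 hB g hg.1 fun i hi => ?_)
  by_contra hiB
  exact hi (hgB i (Finset.mem_compl.2 hiB))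

theorem normOneOn_compl_pos (hB : LinearIndepOn ℝ A.col B) (hg : g ∈ elemVecs A) :
    0 < normOneOn Bᶜ g := by
  obtain ⟨i, hiB, hi⟩ := exists_mem_compl_ne_zero_of_mem_elemVecs hB hg
  exact (abs_pos.2 hi).trans_le (abs_le_normOneOn hiB g)

theorem abs_le_circImb_mul_normOneOn_compl (hB : LinearIndepOn ℝ A.col B)
    (hg : g ∈ elemVecs A) (i : β) : |g i| ≤ circImb A * normOneOn Bᶜ g := by
  have hκ := one_le_circImb hg
  obtain ⟨t, htB, ht⟩ := exists_mem_compl_ne_zero_of_mem_elemVecs hB hg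
  calc |g i| ≤ circImb A * |g t| := abs_le_circImb_mul_abs hg ht i
    _ ≤ circImb A * normOneOn Bᶜ g := by
        gcongr
        exact abs_le_normOneOn htB g

end ElementaryVectors

section Conformal

variable {β : Type*} {u v x y g : β → ℝ}

/-- The relation `u ⊑ v`: `u` and `v` are sign-compatible and `u` is dominated by `v` in absolute
value in every coordinate. -/
def ConformalLE (u v : β → ℝ) : Prop :=
  ∀ i, 0 ≤ u i * v i ∧ |u i| ≤ |v i|

/-- The coordinates in which `y` is at most `c` times the reference point `xstar`; for `c = n - m`
this is the set `R(y)`. -/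
def dominatedCoords (c : ℝ) (xstar y : β → ℝ) : Set β :=
  {i | y i ≤ c * xstar i}

namespace ConformalLE

theorem mem_uIcc (huv : ConformalLE u v) (i : β) : u i ∈ Set.uIcc 0 (v i) := by
  obtain ⟨hsign, habs⟩ := huv i
  rcases mul_nonneg_iff.1 hsign with ⟨hu, hv⟩ | ⟨hu, hv⟩
  · rw [abs_of_nonneg hu, abs_of_nonneg hv] at habs
    exact Set.mem_uIcc.2 (.inl ⟨hu, habs⟩)
  · rw [abs_of_nonpos hu, abs_of_nonpos hv, neg_le_neg_iff] at habs
    exact Set.mem_uIcc.2 (.inr ⟨habs, hu⟩)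

theorem nonneg (huv : ConformalLE u v) {i : β} (hv : 0 ≤ v i) : 0 ≤ u i := by
  have hu := huv.mem_uIcc i
  rw [Set.uIcc_of_le hv] at hu
  exact hu.1

theorem nonpos (huv : ConformalLE u v) {i : β} (hv : v i ≤ 0) : u i ≤ 0 := by
  have hu := huv.mem_uIcc i
  rw [Set.uIcc_of_ge hv] at hu
  exact hu.2

theorem add_nonneg (hg : ConformalLE g (y - x)) (hx : 0 ≤ x) (hy : 0 ≤ y) : 0 ≤ x + g := by
  intro i
  have hxi : 0 ≤ x i := hx i
  have hyi : 0 ≤ y i := hy i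
  have hgi := Set.mem_uIcc.1 (hg.mem_uIcc i)
  simp only [Pi.sub_apply, Pi.zero_apply, Pi.add_apply] at hgi ⊢
  rcases hgi with hgi | hgi <;> linarith

theorem dominatedCoords_subset (hg : ConformalLE g (y - x)) (hx : 0 ≤ x) {a c : ℝ} (ha : 0 ≤ a)
    (hac : a ≤ c) (hc : 1 ≤ c) :
    dominatedCoords c y x ⊆ dominatedCoords c y (x + a • g) := by
  intro i hi
  change x i ≤ c * y i at hi
  change x i + a * g i ≤ c * y i
  rcases Set.mem_uIcc.1 (hg.mem_uIcc i) with ⟨hg_nonneg, hg_le⟩ | ⟨-, hg_nonpos⟩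
  · calc x i + a * g i ≤ x i + c * (y i - x i) := by
          gcongr
          exact hg_le
      _ = c * y i - (c - 1) * x i := by ring
      _ ≤ c * y i := sub_le_self _ (mul_nonneg (sub_nonneg.2 hc) (hx i))
  · linarith [mul_nonpos_of_nonneg_of_nonpos ha hg_nonpos]

theorem mul_normOneOn_le {N : Finset β} {a : ℝ} (hg : ConformalLE g (y - x)) (hx : 0 ≤ x)
    (hy : ∀ i ∈ N, y i = 0) (hstep : 0 ≤ x + a • g) : a * normOneOn N g ≤ normOneOn N x := by
  refine mul_normOneOn_le_of_add_smul_nonneg (fun i hi => hg.nonpos ?_) hstep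
  rw [Pi.sub_apply, hy i hi, zero_sub]
  exact neg_nonpos.2 (hx i)

end ConformalLE

end Conformal

section Decomposition

variable {ι β : Type} [Fintype ι] [Fintype β] {A : Matrix ι β ℝ} {J : Type*} [Fintype J]
  {v : β → ℝ} {h : J → β → ℝ}

/-- The family `h` is a conformal circuit decomposition of `v`: its members are elementary vectors
of `ker A` with `h j ⊑ v` that sum to `v`. -/
structure IsConformalCircuitDecomposition (A : Matrix ι β ℝ) (v : β → ℝ) (h : J → β → ℝ) :
    Prop where
  mem_elemVecs : ∀ j, h j ∈ elemVecs A
  conformalLE : ∀ j, ConformalLE (h j) v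
  sum_eq : ∑ j, h j = v

namespace IsConformalCircuitDecomposition

theorem sum_abs_eq (hh : IsConformalCircuitDecomposition A v h) (i : β) :
    ∑ j, |h j i| = |v i| := by
  have hsum : ∑ j, h j i = v i := by rw [← hh.sum_eq, Finset.sum_apply]
  rcases le_total 0 (v i) with hv | hv
  · have hnonneg (j) : 0 ≤ h j i := (hh.conformalLE j).nonneg hv
    rw [← hsum, Finset.abs_sum_of_nonneg fun j _ => hnonneg j]
    exact Finset.sum_congr rfl fun j _ => abs_of_nonneg (hnonneg j)
  · rw [abs_of_nonpos hv, ← hsum, ← Finset.sum_neg_distrib]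
    exact Finset.sum_congr rfl fun j _ => abs_of_nonpos ((hh.conformalLE j).nonpos hv)

theorem sum_normOneOn_eq (hh : IsConformalCircuitDecomposition A v h) (N : Finset β) :
    ∑ j, normOneOn N (h j) = normOneOn N v := by
  simp only [normOneOn]
  rw [Finset.sum_comm]
  exact Finset.sum_congr rfl fun i _ => hh.sum_abs_eq i

theorem normOneOn_le_card_mul (hh : IsConformalCircuitDecomposition A v h) {N : Finset β} {j₀ : J}
    (hj₀ : ∀ j, normOneOn N (h j) ≤ normOneOn N (h j₀)) :
    normOneOn N v ≤ Fintype.card J * normOneOn N (h j₀) := by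
  rw [← hh.sum_normOneOn_eq, ← nsmul_eq_mul]
  exact Finset.sum_le_card_nsmul _ _ _ fun j _ => hj₀ j

theorem abs_le_circImb_mul_normOneOn_compl [DecidableEq β]
    (hh : IsConformalCircuitDecomposition A v h) {B : Finset β} (hB : LinearIndepOn ℝ A.col B)
    (i : β) : |v i| ≤ circImb A * normOneOn Bᶜ v := by
  rw [← hh.sum_abs_eq, ← hh.sum_normOneOn_eq, Finset.mul_sum]
  exact Finset.sum_le_sum fun j _ =>
    _root_.abs_le_circImb_mul_normOneOn_compl hB (hh.mem_elemVecs j) i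

end IsConformalCircuitDecomposition

end Decomposition

section RatioTest

variable {β : Type*} {x g : β → ℝ} {a : ℝ}

theorem exists_blocking_coordinate [Finite β] (ha : IsGreatest {t : ℝ | 0 ≤ t ∧ 0 ≤ x + t • g} a) :
    ∃ i, g i < 0 ∧ x i + a * g i = 0 := by
  obtain ⟨⟨ha_nonneg, ha_feasible⟩, ha_max⟩ := ha
  by_contra! hslack
  have hfeasible : ∀ᶠ t in nhdsWithin a (Set.Ioi a), ∀ i, 0 ≤ x i + t * g i := by
    refine Filter.eventually_all.2 fun i => ?_
    have hi : 0 ≤ x i + a * g i := ha_feasible i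
    rcases le_or_gt 0 (g i) with hgi | hgi
    · filter_upwards [self_mem_nhdsWithin] with t ht
      have : a * g i ≤ t * g i := mul_le_mul_of_nonneg_right (le_of_lt ht) hgi
      linarith
    · have hpos : 0 < x i + a * g i := hi.lt_of_ne' (hslack i hgi)
      have hcont : ContinuousAt (fun t => x i + t * g i) a := by fun_prop
      exact ((hcont.eventually_const_lt hpos).filter_mono nhdsWithin_le_nhds).mono
        fun _ => le_of_lt
  obtain ⟨t, ht_feasible, ht⟩ := (hfeasible.and self_mem_nhdsWithin).exists
  exact (ha_max ⟨ha_nonneg.trans (le_of_lt ht), ht_feasible⟩).not_gt ht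

end RatioTest

section Polyhedron

variable {ι β : Type*} [Fintype β] {A : Matrix ι β ℝ} {b : ι → ℝ} {x g : β → ℝ}

/-- The polyhedron `P = {z : A z = b, z ≥ 0}` in standard form. -/
def standardPolyhedron (A : Matrix ι β ℝ) (b : ι → ℝ) : Set (β → ℝ) :=
  {z | A *ᵥ z = b ∧ 0 ≤ z}

theorem add_smul_mem_standardPolyhedron_iff (hx : x ∈ standardPolyhedron A b) (hg : A *ᵥ g = 0)
    (a : ℝ) : x + a • g ∈ standardPolyhedron A b ↔ 0 ≤ x + a • g := by
  have hker : A *ᵥ (x + a • g) = b := by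
    rw [mulVec_add, mulVec_smul, hg, smul_zero, add_zero, hx.1]
  exact and_iff_right hker

end Polyhedron

section Augmentation

variable {ι β : Type} [Fintype ι] [Fintype β] {A : Matrix ι β ℝ} {B : Finset β}
  {x y g : β → ℝ} {a : ℝ} {i : β}

theorem normOneOn_le_of_blocking_mem (hB : LinearIndepOn ℝ A.col B) (hi : i ∈ B)
    (hg : g ∈ elemVecs A) (hgi : g i < 0) (ha : 1 ≤ a) (hblock : x i + a * g i = 0)
    (N : Finset β) : normOneOn N g ≤ 2 * A.rank * circImb A * x i := by
  have hκ := one_le_circImb hg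
  have hrank : (1 : ℝ) ≤ A.rank :=
    mod_cast (Finset.card_pos.2 ⟨i, hi⟩).trans_le (card_le_rank_of_linearIndepOn_col hB)
  have hgx : |g i| ≤ x i := by
    rw [abs_of_neg hgi]
    linarith [mul_le_mul_of_nonpos_right ha hgi.le]
  calc normOneOn N g ≤ (A.rank + 1) * (circImb A * |g i|) :=
        normOneOn_le_rank_add_one_mul hg N hgi.ne
    _ ≤ (2 * A.rank) * (circImb A * x i) := by
        gcongr
        linarith
    _ = 2 * A.rank * circImb A * x i := by ring

variable [DecidableEq β]

theorem IsConformalCircuitDecomposition.step_le_card {J : Type*} [Fintype J] {h : J → β → ℝ}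
    (hh : IsConformalCircuitDecomposition A (y - x) h) (hB : LinearIndepOn ℝ A.col B)
    (hx : 0 ≤ x) (hy : ∀ i ∈ Bᶜ, y i = 0) {j₀ : J}
    (hj₀ : ∀ j, normOneOn Bᶜ (h j) ≤ normOneOn Bᶜ (h j₀)) (hstep : 0 ≤ x + a • h j₀) :
    a ≤ Fintype.card J := by
  refine le_of_mul_le_mul_right ?_ (normOneOn_compl_pos hB (hh.mem_elemVecs j₀))
  calc a * normOneOn Bᶜ (h j₀) ≤ normOneOn Bᶜ x :=
        (hh.conformalLE j₀).mul_normOneOn_le hx hy hstep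
    _ = normOneOn Bᶜ (y - x) := (normOneOn_sub_of_forall_eq_zero hy x).symm
    _ ≤ Fintype.card J * normOneOn Bᶜ (h j₀) := hh.normOneOn_le_card_mul hj₀

theorem blocking_le_circImb_mul_normOneOn_compl (hB : LinearIndepOn ℝ A.col B)
    (hg : g ∈ elemVecs A) (ha : 0 ≤ a) (hblock : x i + a * g i = 0)
    (hstep : a * normOneOn Bᶜ g ≤ normOneOn Bᶜ x) : x i ≤ circImb A * normOneOn Bᶜ x := by
  have hκ := one_le_circImb hg
  calc x i = a * -g i := by linarith
    _ ≤ a * (circImb A * normOneOn Bᶜ g) := by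
        gcongr
        exact (neg_le_abs _).trans (abs_le_circImb_mul_normOneOn_compl hB hg i)
    _ = circImb A * (a * normOneOn Bᶜ g) := by ring
    _ ≤ circImb A * normOneOn Bᶜ x := by gcongr

end Augmentation

section Growth

variable {ι : Type} [Fintype ι] {n : ℕ} {A : Matrix ι (Fin n) ℝ} {B : Finset (Fin n)}
  {xstar x : Fin n → ℝ}

/-- The set `L(y)` of coordinates of `xstar` that are large compared to the mass of `y` outside
`B`. -/
def largeCoords (A : Matrix ι (Fin n) ℝ) (B : Finset (Fin n)) (xstar y : Fin n → ℝ) :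
    Set (Fin n) :=
  {i | xstar i > n * circImb A * normOneOn Bᶜ y}

theorem mem_compl_largeCoords_of_le (hκ : 0 ≤ circImb A) {i : Fin n}
    (hi : xstar i ≤ circImb A * normOneOn Bᶜ x) : i ∈ (largeCoords A B xstar x)ᶜ := by
  have hn : (1 : ℝ) ≤ n := mod_cast i.pos
  have hS := normOneOn_nonneg Bᶜ x
  refine not_lt.2 (hi.trans ?_)
  rw [mul_assoc]
  exact le_mul_of_one_le_left (by positivity) hn

theorem blocking_notMem_dominatedCoords {J : Type*} [Fintype J] {h : J → Fin n → ℝ}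
    (hB : LinearIndepOn ℝ A.col B) (hxstar : 0 ≤ xstar) (hxstarB : ∀ i ∈ Bᶜ, xstar i = 0)
    (hx : 0 ≤ x) (hh : IsConformalCircuitDecomposition A (xstar - x) h) {j₀ : J}
    (hj₀ : ∀ j, normOneOn Bᶜ (h j) ≤ normOneOn Bᶜ (h j₀)) {a c : ℝ} (ha : 1 ≤ a)
    (hstep : 0 ≤ x + a • h j₀) (hJc : Fintype.card J ≤ c) (hcn : c ≤ n)
    (hgap : normInfOn (largeCoords A B xstar x)ᶜ (x - xstar) >
      2 * A.rank * (n : ℝ) ^ 2 * circImb A ^ 2 * normInfOn (largeCoords A B xstar x)ᶜ xstar)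
    {i : Fin n} (hgi : h j₀ i < 0) (hblock : x i + a * h j₀ i = 0) :
    i ∉ dominatedCoords c xstar x := by
  have hg := hh.mem_elemVecs j₀
  have hκ : 0 ≤ circImb A := zero_le_one.trans (one_le_circImb hg)
  have hc : 0 ≤ c := (Nat.cast_nonneg _).trans hJc
  have hmass := normOneOn_sub_of_forall_eq_zero hxstarB x
  suffices c * xstar i < x i from not_le_of_gt this
  by_cases hi : i ∈ B
  · have hxstar_le : xstar i ≤ x i := by
      by_contra! hlt
      exact hgi.not_ge ((hh.conformalLE j₀).nonneg (sub_nonneg.2 hlt.le))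
    have hx_le := blocking_le_circImb_mul_normOneOn_compl hB hg (zero_le_one.trans ha) hblock
      ((hh.conformalLE j₀).mul_normOneOn_le hx hxstarB hstep)
    have hiT := mem_compl_largeCoords_of_le hκ (hxstar_le.trans hx_le)
    refine mul_lt_of_normInfOn_gap (Nat.cast_nonneg _) hκ hc hcn hxstar hiT
      (S := normOneOn Bᶜ x) (fun t => ?_) ?_ hgap
    · rw [abs_sub_comm, ← hmass]
      exact hh.abs_le_circImb_mul_normOneOn_compl hB t
    · calc normOneOn Bᶜ x ≤ Fintype.card J * normOneOn Bᶜ (h j₀) :=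
            hmass.symm.trans_le (hh.normOneOn_le_card_mul hj₀)
        _ ≤ c * (2 * A.rank * circImb A * x i) :=
            mul_le_mul hJc (normOneOn_le_of_blocking_mem hB hi hg hgi ha hblock _)
              (normOneOn_nonneg _ _) hc
  · rw [hxstarB i (Finset.mem_compl.2 hi), mul_zero]
    linarith [mul_neg_of_pos_of_neg (zero_lt_one.trans_le ha) hgi]

theorem R_strictly_grows_general {b : ι → ℝ} (hB : LinearIndepOn ℝ A.col B)
    (hxstar : xstar ∈ standardPolyhedron A b) (hxstarB : ∀ i ∉ B, xstar i = 0)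
    (hx : x ∈ standardPolyhedron A b) {J : Type*} [Fintype J]
    (hJ : Fintype.card J ≤ n - A.rank) {h : J → Fin n → ℝ}
    (hh : IsConformalCircuitDecomposition A (xstar - x) h) {j₀ : J}
    (hj₀ : ∀ j, normOneOn Bᶜ (h j) ≤ normOneOn Bᶜ (h j₀)) {a : ℝ}
    (ha : IsGreatest {t : ℝ | 0 ≤ t ∧ x + t • h j₀ ∈ standardPolyhedron A b} a)
    (hgap : normInfOn (largeCoords A B xstar x)ᶜ (x - xstar) >
      2 * A.rank * (n : ℝ) ^ 2 * circImb A ^ 2 * normInfOn (largeCoords A B xstar x)ᶜ xstar) :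
    dominatedCoords (n - A.rank) xstar x ⊂
      dominatedCoords (n - A.rank) xstar (x + a • h j₀) := by
  have hN : ∀ i ∈ Bᶜ, xstar i = 0 := fun i hi => hxstarB i (Finset.mem_compl.1 hi)
  have hg := hh.conformalLE j₀
  simp only [add_smul_mem_standardPolyhedron_iff hx (hh.mem_elemVecs j₀).1] at ha
  have hJc : (Fintype.card J : ℝ) ≤ n - A.rank := by
    rw [← Nat.cast_sub (by simpa using A.rank_le_card_width)]
    exact_mod_cast hJ
  have ha_one : 1 ≤ a :=
    ha.2 ⟨zero_le_one, by rw [one_smul]; exact hg.add_nonneg hx.2 hxstar.2⟩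
  have ha_le : a ≤ n - A.rank := (hh.step_le_card hB hx.2 hN hj₀ ha.1.2).trans hJc
  have hsubset := hg.dominatedCoords_subset hx.2 ha.1.1 ha_le (ha_one.trans ha_le)
  obtain ⟨i, hgi, hblock⟩ := exists_blocking_coordinate ha
  refine (Set.ssubset_iff_of_subset hsubset).2 ⟨i, ?_, ?_⟩
  · change x i + a * h j₀ i ≤ _
    rw [hblock]
    exact mul_nonneg (ha.1.1.trans ha_le) (hxstar.2 i)
  · exact blocking_notMem_dominatedCoords hB hxstar.2 hN hx.2 hh hj₀ ha_one ha.1.2 hJc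
      (sub_le_self _ (Nat.cast_nonneg _)) hgap hgi hblock

end Growth

/-- If `‖x_T - x*_T‖_∞ > 2 m n² κ_A² ‖x*_T‖_∞` for `T = [n] ∖ L(x)`, then the set `R`
strictly grows in one step of the `shoot towards the optimum' scheme. -/
theorem R_strictly_grows {m n : ℕ} (hmn : m < n)
    (A : Matrix (Fin m) (Fin n) ℝ) (hrank : A.rank = m) (b : Fin m → ℝ)
    (P : Set (Fin n → ℝ)) (hP : P = {z : Fin n → ℝ | A.mulVec z = b ∧ 0 ≤ z})
    (B : Finset (Fin n)) (hBcard : B.card = m)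
    (hBind : LinearIndependent ℝ (fun i : {i : Fin n // i ∈ B} => A.transpose i.val))
    (xstar : Fin n → ℝ) (hxstarP : xstar ∈ P) (hxstar0 : ∀ i ∉ B, xstar i = 0)
    (Lset Rset : (Fin n → ℝ) → Set (Fin n))
    (hLset : Lset = fun y => {i | xstar i > (n : ℝ) * circImb A * ∑ j ∈ Bᶜ, |y j|})
    (hRset : Rset = fun y => {i | y i ≤ ((n : ℝ) - m) * xstar i})
    (x : Fin n → ℝ) (hxP : x ∈ P) (hxne : x ≠ xstar)
    (T : Set (Fin n)) (hT : T = (Lset x)ᶜ)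
    (k : ℕ) (hk : k ≤ n - m) (h : Fin k → Fin n → ℝ)
    (hhel : ∀ j, h j ∈ elemVecs A)
    (hhconf : ∀ j i, 0 ≤ h j i * (xstar i - x i) ∧ |h j i| ≤ |xstar i - x i|)
    (hhsum : (∑ j, h j) = xstar - x)
    (j₀ : Fin k) (hj₀ : ∀ j, (∑ i ∈ Bᶜ, |h j i|) ≤ ∑ i ∈ Bᶜ, |h j₀ i|)
    (g : Fin n → ℝ) (hg : g = h j₀)
    (α : ℝ) (hα : IsGreatest {a : ℝ | 0 ≤ a ∧ x + a • g ∈ P} α)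
    (x' : Fin n → ℝ) (hx' : x' = x + α • g)
    (hbig : normInfOn T (x - xstar) >
      2 * (m : ℝ) * (n : ℝ) ^ 2 * (circImb A) ^ 2 * normInfOn T xstar) :
    Rset x ⊂ Rset x' := by
  subst hP hLset hRset hT hg hx'
  have hgrow := R_strictly_grows_general hBind hxstarP hxstar0 hxP (by simpa [hrank] using hk)
    ⟨hhel, hhconf, hhsum⟩ hj₀ hα (by rw [hrank]; exact hbig)
  rwa [hrank] at hgrow
end
end

section
/- Let A ∈ ℝ^{m×n}, b ∈ ℝ^m, c̃ ∈ ℝⁿ with c̃ ≥ 0, and P = {x ∈ ℝⁿ : Ax = b, x ≥ 0}. Let x ∈ P, let g minimize ⟨c̃, z⟩ over F = {z ∈ ker(A) : Σ_{i ∈ supp(x)} z_i⁻ / x_i ≤ 1 and z_i ≥ 0 for all i ∉ supp(x)}, and let s ∈ ℝⁿ satisfy s − c̃ ∈ Im(Aᵀ), s ≥ 0, and s_i x_i ≤ −⟨c̃, g⟩ for all i ∈ [n] (dual optimality for the minimum-ratio problem with weights 1/x). If ⟨c̃, g⟩ = 0, then ⟨s, x⟩ = 0; consequently x is an optimal solution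 of min ⟨c̃, z⟩ over z ∈ P. -/
open Matrix
open scoped BigOperators

noncomputable section
open Classical

/-!
The vector `s` is a reduced cost: it differs from the cost `c` by an element of the row space of
`A`, so `s` and `c` assign the same value to every direction in `ker A` and hence rank the points
of an affine fibre `{z | A z = b}` in the same way. Now `⟨s, z⟩ ≥ 0` for all `z ≥ 0`, while a zero
ratio value forces `sᵢ xᵢ ≤ 0` for each `i`, so `⟨s, x⟩ = 0` and `x` attains the lower bound.
-/

theorem dotProduct_eq_zero_of_nonneg_of_mul_nonpos {ι R : Type*} [Fintype ι]
    [NonUnitalNonAssocSemiring R] [PartialOrder R] [PosMulMono R] {s x : ι → R}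
    (hs : 0 ≤ s) (hx : 0 ≤ x) (hsx : ∀ i, s i * x i ≤ 0) : s ⬝ᵥ x = 0 :=
  Finset.sum_eq_zero fun i _ => (hsx i).antisymm (mul_nonneg (hs i) (hx i))

section ReducedCost

variable {ι κ R : Type*} [Fintype ι] [Fintype κ] {A : Matrix κ ι R} {c s x z : ι → R} {y : κ → R}

theorem dotProduct_eq_of_sub_eq_transpose_mulVec [NonUnitalCommRing R]
    (hsc : s - c = Aᵀ *ᵥ y) (hz : A *ᵥ z = 0) : s ⬝ᵥ z = c ⬝ᵥ z := by
  rw [← sub_eq_zero, ← sub_dotProduct, hsc, mulVec_transpose, ← dotProduct_mulVec, hz,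
    dotProduct_zero]

theorem dotProduct_le_dotProduct_iff_of_sub_eq_transpose_mulVec [NonUnitalCommRing R]
    [PartialOrder R] [IsOrderedAddMonoid R]
    (hsc : s - c = Aᵀ *ᵥ y) (hxz : A *ᵥ x = A *ᵥ z) :
    c ⬝ᵥ x ≤ c ⬝ᵥ z ↔ s ⬝ᵥ x ≤ s ⬝ᵥ z := by
  have hker : A *ᵥ (z - x) = 0 := by rw [mulVec_sub, hxz, sub_self]
  rw [← sub_nonneg, ← dotProduct_sub, ← dotProduct_eq_of_sub_eq_transpose_mulVec hsc hker,
    dotProduct_sub, sub_nonneg]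

theorem ratio_circuit_terminate_general [CommRing R] [PartialOrder R] [IsOrderedRing R]
    {b : κ → R} (hx : x ∈ {z | A *ᵥ z = b ∧ 0 ≤ z}) (hs : 0 ≤ s)
    (hsc : ∃ y, s - c = Aᵀ *ᵥ y) (hsx : ∀ i, s i * x i ≤ 0) :
    s ⬝ᵥ x = 0 ∧ ∀ z ∈ {z | A *ᵥ z = b ∧ 0 ≤ z}, c ⬝ᵥ x ≤ c ⬝ᵥ z := by
  obtain ⟨hAx, hx_nonneg⟩ := hx
  obtain ⟨y, hy⟩ := hsc
  have hsx_zero : s ⬝ᵥ x = 0 := dotProduct_eq_zero_of_nonneg_of_mul_nonpos hs hx_nonneg hsx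
  refine ⟨hsx_zero, fun z ⟨hAz, hz_nonneg⟩ => ?_⟩
  rw [dotProduct_le_dotProduct_iff_of_sub_eq_transpose_mulVec hy (hAx.trans hAz.symm), hsx_zero]
  exact dotProduct_nonneg_of_nonneg hs hz_nonneg

end ReducedCost

/-- If `Ratio-Circuit` returns a direction of value `⟨c̃, g⟩ = 0`, then the current point is
optimal: `⟨s, x⟩ = 0` and `x` minimizes `⟨c̃, ·⟩` over `P`. -/
theorem ratio_circuit_terminate {m n : ℕ}
    (A : Matrix (Fin m) (Fin n) ℝ) (b : Fin m → ℝ)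
    (ctil : Fin n → ℝ) (hctil : 0 ≤ ctil)
    (P : Set (Fin n → ℝ)) (hP : P = {z : Fin n → ℝ | A.mulVec z = b ∧ 0 ≤ z})
    (x : Fin n → ℝ) (hx : x ∈ P)
    (F : Set (Fin n → ℝ))
    (hF : F = {z : Fin n → ℝ | A.mulVec z = 0 ∧
      (∑ i ∈ Finset.univ.filter (fun i => x i ≠ 0), max 0 (-(z i)) / x i) ≤ 1 ∧
      ∀ i, x i = 0 → 0 ≤ z i})
    (g : Fin n → ℝ) (hgF : g ∈ F) (hgmin : ∀ z ∈ F, ctil ⬝ᵥ g ≤ ctil ⬝ᵥ z)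
    (s : Fin n → ℝ) (hsnonneg : 0 ≤ s)
    (hsdual : ∃ y : Fin m → ℝ, s - ctil = A.transpose.mulVec y)
    (hsx : ∀ i, s i * x i ≤ -(ctil ⬝ᵥ g))
    (hzero : ctil ⬝ᵥ g = 0) :
    s ⬝ᵥ x = 0 ∧ ∀ z ∈ P, ctil ⬝ᵥ x ≤ ctil ⬝ᵥ z := by
  subst hP
  exact ratio_circuit_terminate_general hx hsnonneg hsdual (by simpa [hzero] using hsx)
end
end

section
/- Let A ∈ ℝ^{m_A×n} and B ∈ ℝ^{m_B×n} with rk([A; B]) = n (the stacked matrix has rank n), and let M = [[A, 0], [B, I_{m_B}]] ∈ ℝ^{(m_A+m_B)×(n+m_B)}. Then a vector g ∈ ℝⁿ is an elementary vector in the general-form sense (i.e., g ∈ ker(A), Bg ≠ 0, and Bg is support-minimal in {By : y ∈ ker(A)} \ {0}) if and only if there exists h ∈ ℝ^{m_B} with (g, h) ∈ ker(M), h ≠ 0, and h support-minimal in the projection of ker(M) onto the last m_B coordinates. Moreover, for every b ∈ ℝ^{m_A}, d ∈ ℝ^{m_B}, writing P = {x ∈ ℝⁿ : Ax = b, Bx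 ≤ d} and Q = {s ∈ ℝ^{m_B} : ∃x, M(x, s) = (b, d), s ≥ 0}, the map ψ defined by M(ψ(s), s) = (b, d) is a well-defined invertible affine one-to-one mapping from Q onto P, and for any such pair (g, h) and any s ∈ Q, ψ(aug_Q(s, h)) = aug_P(ψ(s), g). -/
open Matrix
open scoped BigOperators

noncomputable section
open Classical

/-!
The equation `M (x, s) = (b, d)` says `A x = b` and `s = d - B x`. Hence the projection of `ker M`
onto the slack coordinates is the image of `ker A` under `B`, and the sign in `h = -B g` does not
affect supports; likewise `Q` is the image of `P` under the slack map `x ↦ d - B x`. Full column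
rank provides a linear left inverse `L` of `x ↦ (A x, B x)`, so `ψ s = L (b, d - s)` undoes the
slack map on `{x | A x = b}`. Since the slack map sends `x + a g` to `s + a h`, exactly the same
step lengths are feasible at `x` in `P` and at `s` in `Q`.
-/

section SlackReduction

variable {ι κ ν R K : Type*}

section SlackMatrix

/-- The matrix `M = [[A, 0], [B, I]]` of the system obtained from `A x = b`, `B x ≤ d` by adding
slack variables `s`. -/
def slackMatrix [DecidableEq κ] [Zero R] [One R] (A : Matrix ι ν R) (B : Matrix κ ν R) :
    Matrix (ι ⊕ κ) (ν ⊕ κ) R :=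
  fromBlocks A 0 B 1

variable [Fintype ν] [Fintype κ] [DecidableEq κ] [Ring R] {A : Matrix ι ν R} {B : Matrix κ ν R}

theorem slackMatrix_mulVec_eq_iff {x : ν → R} {s : κ → R} {b : ι → R} {d : κ → R} :
    slackMatrix A B *ᵥ Sum.elim x s = Sum.elim b d ↔ A *ᵥ x = b ∧ s = d - B *ᵥ x := by
  simp [slackMatrix, fromBlocks_mulVec, Sum.elim_eq_iff, eq_sub_iff_add_eq']

theorem slackMatrix_mulVec_eq_zero_iff {x : ν → R} {s : κ → R} :
    slackMatrix A B *ᵥ Sum.elim x s = 0 ↔ A *ᵥ x = 0 ∧ s = -(B *ᵥ x) := by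
  rw [← Sum.elim_zero_zero, slackMatrix_mulVec_eq_iff, zero_sub]

end SlackMatrix

variable [Fintype ν]

section ElementaryVectors

/-- `w` is nonzero and no nonzero vector of `W` has strictly smaller support. The membership
`w ∈ W` is not part of the definition. -/
def IsSupportMinimal [Zero R] (W : Set (κ → R)) (w : κ → R) : Prop :=
  w ≠ 0 ∧ ∀ w' ∈ W, w' ≠ 0 → ¬ Function.support w' ⊂ Function.support w

theorem isSupportMinimal_neg_iff [AddGroup R] {W : Set (κ → R)} {w : κ → R} :
    IsSupportMinimal W (-w) ↔ IsSupportMinimal W w := by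
  simp only [IsSupportMinimal, Function.support_neg, ne_eq, neg_eq_zero]

variable [Ring R]

/-- Elementary vectors of the general form `A x = b`, `B x ≤ d`: vectors `g` of `ker A` for which
`B g` is nonzero and support-minimal among the nonzero vectors `B y` with `y ∈ ker A`. -/
def IsElementary (A : Matrix ι ν R) (B : Matrix κ ν R) (g : ν → R) : Prop :=
  A *ᵥ g = 0 ∧ B *ᵥ g ≠ 0 ∧ ∀ y, A *ᵥ y = 0 → B *ᵥ y ≠ 0 →
    ¬ Function.support (B *ᵥ y) ⊂ Function.support (B *ᵥ g)

/-- The projection of the kernel of the slack matrix onto the slack coordinates. -/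
def slackSpace [Fintype κ] [DecidableEq κ] (A : Matrix ι ν R) (B : Matrix κ ν R) : Set (κ → R) :=
  {h | ∃ x, slackMatrix A B *ᵥ Sum.elim x h = 0}

variable {A : Matrix ι ν R} {B : Matrix κ ν R}

theorem isElementary_iff_isSupportMinimal {g : ν → R} :
    IsElementary A B g ↔
      A *ᵥ g = 0 ∧ IsSupportMinimal (B.mulVec '' {y | A *ᵥ y = 0}) (B *ᵥ g) := by
  simp only [IsElementary, IsSupportMinimal, Set.forall_mem_image, Set.mem_ofPred_eq]

variable [Fintype κ] [DecidableEq κ]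

theorem slackSpace_eq_image_mulVec : slackSpace A B = B.mulVec '' {y | A *ᵥ y = 0} := by
  ext h
  simp only [slackSpace, slackMatrix_mulVec_eq_zero_iff, Set.mem_ofPred_eq, Set.mem_image]
  constructor
  · rintro ⟨x, hAx, rfl⟩
    exact ⟨-x, by rw [mulVec_neg, hAx, neg_zero], mulVec_neg x B⟩
  · rintro ⟨y, hAy, rfl⟩
    exact ⟨-y, by rw [mulVec_neg, hAy, neg_zero], by rw [mulVec_neg, neg_neg]⟩

theorem isElementary_iff_exists_isSupportMinimal_slackSpace {g : ν → R} :
    IsElementary A B g ↔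
      ∃ h, slackMatrix A B *ᵥ Sum.elim g h = 0 ∧ IsSupportMinimal (slackSpace A B) h := by
  simp only [slackMatrix_mulVec_eq_zero_iff, and_assoc, exists_and_left, exists_eq_left,
    isSupportMinimal_neg_iff, slackSpace_eq_image_mulVec, isElementary_iff_isSupportMinimal]

end ElementaryVectors

section Polyhedra

/-- The polyhedron `P = {x | A x = b, B x ≤ d}`. -/
def generalPolyhedron [Ring R] [PartialOrder R] (A : Matrix ι ν R) (B : Matrix κ ν R)
    (b : ι → R) (d : κ → R) : Set (ν → R) :=
  {x | A *ᵥ x = b ∧ B *ᵥ x ≤ d}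

/-- The polyhedron `Q` of nonnegative slack vectors of the system `A x = b`, `B x ≤ d`. -/
def slackPolyhedron [Fintype κ] [DecidableEq κ] [Ring R] [PartialOrder R]
    (A : Matrix ι ν R) (B : Matrix κ ν R) (b : ι → R) (d : κ → R) : Set (κ → R) :=
  {s | (∃ x, slackMatrix A B *ᵥ Sum.elim x s = Sum.elim b d) ∧ 0 ≤ s}

/-- The step lengths `a ≥ 0` for which `z + a • v` stays in `S`. The augmentation of `z` along `v`
in `S` is `z + α • v` for the greatest such step length `α`. -/
def stepLengths {V : Type*} [Zero R] [LE R] [Add V] [SMul R V] (S : Set V) (z v : V) : Set R :=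
  {a | 0 ≤ a ∧ z + a • v ∈ S}

section OrderedRing

variable [Ring R] [PartialOrder R] [Fintype κ] [DecidableEq κ]
  {A : Matrix ι ν R} {B : Matrix κ ν R} {b : ι → R} {d : κ → R} {ψ : (κ → R) → ν → R}

theorem slackMatrix_mulVec_of_leftInvOn
    (hψ : Set.LeftInvOn ψ (fun x ↦ d - B *ᵥ x) {x | A *ᵥ x = b}) {s : κ → R}
    (hs : s ∈ slackPolyhedron A B b d) :
    slackMatrix A B *ᵥ Sum.elim (ψ s) s = Sum.elim b d := by
  obtain ⟨⟨x, hx⟩, -⟩ := hs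
  obtain ⟨hAx, rfl⟩ := slackMatrix_mulVec_eq_iff.mp hx
  rwa [hψ hAx]

variable [IsOrderedRing R]

theorem slackPolyhedron_eq_image :
    slackPolyhedron A B b d = (fun x ↦ d - B *ᵥ x) '' generalPolyhedron A B b d := by
  ext s
  simp only [slackPolyhedron, generalPolyhedron, slackMatrix_mulVec_eq_iff, Set.mem_ofPred_eq,
    Set.mem_image]
  constructor
  · rintro ⟨⟨x, hAx, rfl⟩, hs⟩
    exact ⟨x, ⟨hAx, sub_nonneg.mp hs⟩, rfl⟩
  · rintro ⟨x, ⟨hAx, hBx⟩, rfl⟩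
    exact ⟨⟨x, hAx, rfl⟩, sub_nonneg.mpr hBx⟩

theorem sub_mulVec_mem_slackPolyhedron_iff {x : ν → R} (hAx : A *ᵥ x = b) :
    d - B *ᵥ x ∈ slackPolyhedron A B b d ↔ x ∈ generalPolyhedron A B b d := by
  have hM : ∃ y, slackMatrix A B *ᵥ Sum.elim y (d - B *ᵥ x) = Sum.elim b d :=
    ⟨x, slackMatrix_mulVec_eq_iff.mpr ⟨hAx, rfl⟩⟩
  simp only [slackPolyhedron, generalPolyhedron, Set.mem_ofPred_eq, hM, hAx, true_and, sub_nonneg]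

theorem bijOn_slackPolyhedron_of_leftInvOn
    (hψ : Set.LeftInvOn ψ (fun x ↦ d - B *ᵥ x) {x | A *ᵥ x = b}) :
    Set.BijOn ψ (slackPolyhedron A B b d) (generalPolyhedron A B b d) := by
  have hψP : Set.LeftInvOn ψ (fun x ↦ d - B *ᵥ x) (generalPolyhedron A B b d) :=
    hψ.mono fun x hx ↦ hx.1
  rw [slackPolyhedron_eq_image]
  exact hψP.injOn.bijOn_image.symm ⟨hψP.rightInvOn_image, hψP⟩

end OrderedRing

section OrderedCommRing

variable [CommRing R]

theorem sub_mulVec_add_smul {B : Matrix κ ν R} {d : κ → R} (x g : ν → R) (a : R) :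
    d - B *ᵥ (x + a • g) = d - B *ᵥ x + a • -(B *ᵥ g) := by
  rw [mulVec_add, mulVec_smul, smul_neg, sub_add_eq_sub_sub, sub_eq_add_neg _ (a • _)]

theorem mulVec_add_smul_of_mulVec_eq_zero {A : Matrix ι ν R} {g : ν → R} (hAg : A *ᵥ g = 0)
    (x : ν → R) (a : R) : A *ᵥ (x + a • g) = A *ᵥ x := by
  rw [mulVec_add, mulVec_smul, hAg, smul_zero, add_zero]

variable [PartialOrder R] [IsOrderedRing R] [Fintype κ] [DecidableEq κ]
  {A : Matrix ι ν R} {B : Matrix κ ν R} {b : ι → R} {d : κ → R}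

theorem stepLengths_slackPolyhedron_eq {x g : ν → R} (hAx : A *ᵥ x = b) (hAg : A *ᵥ g = 0) :
    (stepLengths (slackPolyhedron A B b d) (d - B *ᵥ x) (-(B *ᵥ g)) : Set R) =
      stepLengths (generalPolyhedron A B b d) x g := by
  ext a
  have hA : A *ᵥ (x + a • g) = b := (mulVec_add_smul_of_mulVec_eq_zero hAg x a).trans hAx
  simp only [stepLengths, Set.mem_ofPred_eq, ← sub_mulVec_add_smul,
    sub_mulVec_mem_slackPolyhedron_iff hA]

theorem map_augmentation_of_leftInvOn {ψ : (κ → R) → ν → R}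
    (hψ : Set.LeftInvOn ψ (fun x ↦ d - B *ᵥ x) {x | A *ᵥ x = b})
    {g : ν → R} {h s : κ → R} (hgh : slackMatrix A B *ᵥ Sum.elim g h = 0)
    (hs : s ∈ slackPolyhedron A B b d) {αQ αP : R}
    (hαQ : IsGreatest (stepLengths (slackPolyhedron A B b d) s h) αQ)
    (hαP : IsGreatest (stepLengths (generalPolyhedron A B b d) (ψ s) g) αP) :
    ψ (s + αQ • h) = ψ s + αP • g := by
  obtain ⟨hAg, rfl⟩ := slackMatrix_mulVec_eq_zero_iff.mp hgh
  obtain ⟨⟨x, hx⟩, -⟩ := hs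
  obtain ⟨hAx, rfl⟩ := slackMatrix_mulVec_eq_iff.mp hx
  have hψx : ψ (d - B *ᵥ x) = x := hψ hAx
  rw [hψx] at hαP ⊢
  rw [stepLengths_slackPolyhedron_eq hAx hAg] at hαQ
  rw [hαQ.unique hαP, ← sub_mulVec_add_smul]
  exact hψ ((mulVec_add_smul_of_mulVec_eq_zero hAg x αP).trans hAx)

end OrderedCommRing

end Polyhedra

section LeftInverse

variable [Field K]

theorem mulVec_injective_of_rank_eq_card {A : Matrix ι ν K} (hA : A.rank = Fintype.card ν) :
    Function.Injective A.mulVec := by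
  rw [mulVec_injective_iff, linearIndependent_iff_card_eq_finrank_span, ← hA,
    rank_eq_finrank_span_cols]
  rfl

theorem exists_affineMap_leftInvOn_sub_mulVec {A : Matrix ι ν K} {B : Matrix κ ν K}
    (hAB : Function.Injective (fromRows A B).mulVec) (b : ι → K) (d : κ → K) :
    ∃ ψ : (κ → K) →ᵃ[K] (ν → K), Set.LeftInvOn ψ (fun x ↦ d - B *ᵥ x) {x | A *ᵥ x = b} := by
  have hker : LinearMap.ker (A.mulVecLin.prod B.mulVecLin) = ⊥ := by
    refine LinearMap.ker_eq_bot.mpr fun x y hxy ↦ hAB ?_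
    rw [fromRows_mulVec, fromRows_mulVec]
    exact congrArg (fun p ↦ Sum.elim p.1 p.2) hxy
  obtain ⟨L, hL⟩ := LinearMap.exists_leftInverse_of_injective _ hker
  refine ⟨L.toAffineMap.comp ((AffineMap.const K _ b).prod
    (AffineMap.const K _ d - AffineMap.id K _)), ?_⟩
  rintro x rfl
  simpa using LinearMap.congr_fun hL x

end LeftInverse

theorem general_form_circuits_general [Fintype κ] [DecidableEq κ]
    [Field K] [PartialOrder K] [IsOrderedRing K] (A : Matrix ι ν K) (B : Matrix κ ν K)
    (hrank : (fromRows A B).rank = Fintype.card ν) :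
    (∀ g, IsElementary A B g ↔
      ∃ h, slackMatrix A B *ᵥ Sum.elim g h = 0 ∧ IsSupportMinimal (slackSpace A B) h) ∧
    ∀ (b : ι → K) (d : κ → K), ∃ ψ : (κ → K) →ᵃ[K] (ν → K),
      (∀ s ∈ slackPolyhedron A B b d, slackMatrix A B *ᵥ Sum.elim (ψ s) s = Sum.elim b d) ∧
      Set.BijOn ψ (slackPolyhedron A B b d) (generalPolyhedron A B b d) ∧
      ∀ g h, slackMatrix A B *ᵥ Sum.elim g h = 0 → ∀ s ∈ slackPolyhedron A B b d, ∀ αQ αP : K,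
        IsGreatest (stepLengths (slackPolyhedron A B b d) s h) αQ →
        IsGreatest (stepLengths (generalPolyhedron A B b d) (ψ s) g) αP →
        ψ (s + αQ • h) = ψ s + αP • g := by
  refine ⟨fun g ↦ isElementary_iff_exists_isSupportMinimal_slackSpace, fun b d ↦ ?_⟩
  obtain ⟨ψ, hψ⟩ :=
    exists_affineMap_leftInvOn_sub_mulVec (mulVec_injective_of_rank_eq_card hrank) b d
  exact ⟨ψ, fun s hs ↦ slackMatrix_mulVec_of_leftInvOn hψ hs,
    bijOn_slackPolyhedron_of_leftInvOn hψ,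
    fun g h hgh s hs αQ αP ↦ map_augmentation_of_leftInvOn hψ hgh hs⟩

end SlackReduction

/-- Circuits in general form reduce to circuits in subspace (standard) form:
elementary vectors in the sense of Kafer–Pashkovich–Sanità correspond one-to-one to
elementary vectors of the projection of `ker M` onto the slack coordinates, the polyhedron
`P = {x : Ax = b, Bx ≤ d}` is the image of `Q` under an invertible affine one-to-one map `ψ`,
and `ψ` intertwines maximal circuit augmentations. -/
theorem general_form_circuits {mA mB n : ℕ}
    (A : Matrix (Fin mA) (Fin n) ℝ) (B : Matrix (Fin mB) (Fin n) ℝ)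
    (hrank : (Matrix.fromRows A B).rank = n)
    (M : Matrix (Fin mA ⊕ Fin mB) (Fin n ⊕ Fin mB) ℝ)
    (hM : M = Matrix.fromBlocks A 0 B 1) :
    (∀ g : Fin n → ℝ,
      (A.mulVec g = 0 ∧ B.mulVec g ≠ 0 ∧
        ∀ y : Fin n → ℝ, A.mulVec y = 0 → B.mulVec y ≠ 0 →
          ¬ ({i | B.mulVec y i ≠ 0} ⊂ {i | B.mulVec g i ≠ 0}))
      ↔ (∃ h : Fin mB → ℝ, M.mulVec (Sum.elim g h) = 0 ∧ h ≠ 0 ∧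
          ∀ h' : Fin mB → ℝ, (∃ x' : Fin n → ℝ, M.mulVec (Sum.elim x' h') = 0) → h' ≠ 0 →
            ¬ ({i | h' i ≠ 0} ⊂ {i | h i ≠ 0}))) ∧
    (∀ (b : Fin mA → ℝ) (d : Fin mB → ℝ),
      ∃ ψ : (Fin mB → ℝ) →ᵃ[ℝ] (Fin n → ℝ),
        (∀ s ∈ {s : Fin mB → ℝ |
            (∃ x : Fin n → ℝ, M.mulVec (Sum.elim x s) = Sum.elim b d) ∧ 0 ≤ s},
          M.mulVec (Sum.elim (ψ s) s) = Sum.elim b d) ∧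
        Set.BijOn ψ
          {s : Fin mB → ℝ |
            (∃ x : Fin n → ℝ, M.mulVec (Sum.elim x s) = Sum.elim b d) ∧ 0 ≤ s}
          {x : Fin n → ℝ | A.mulVec x = b ∧ B.mulVec x ≤ d} ∧
        (∀ (g : Fin n → ℝ) (h : Fin mB → ℝ),
          M.mulVec (Sum.elim g h) = 0 → h ≠ 0 →
          (∀ h' : Fin mB → ℝ, (∃ x' : Fin n → ℝ, M.mulVec (Sum.elim x' h') = 0) → h' ≠ 0 →
            ¬ ({i | h' i ≠ 0} ⊂ {i | h i ≠ 0})) →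
          ∀ s ∈ {s : Fin mB → ℝ |
              (∃ x : Fin n → ℝ, M.mulVec (Sum.elim x s) = Sum.elim b d) ∧ 0 ≤ s},
            ∀ αQ αP : ℝ,
              IsGreatest {a : ℝ | 0 ≤ a ∧ (s + a • h) ∈
                {s' : Fin mB → ℝ |
                  (∃ x : Fin n → ℝ, M.mulVec (Sum.elim x s') = Sum.elim b d) ∧ 0 ≤ s'}} αQ →
              IsGreatest {a : ℝ | 0 ≤ a ∧ (ψ s + a • g) ∈
                {x : Fin n → ℝ | A.mulVec x = b ∧ B.mulVec x ≤ d}} αP →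
              ψ (s + αQ • h) = ψ s + αP • g)) := by
  subst hM
  have ⟨helem, hpoly⟩ := general_form_circuits_general A B (by rw [hrank, Fintype.card_fin])
  exact ⟨helem, fun b d ↦ (hpoly b d).imp fun _ ⟨hsys, hbij, haug⟩ ↦
    ⟨hsys, hbij, fun g h hgh _ _ ↦ haug g h hgh⟩⟩
end
end
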